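/- Let k ≤ n and let A ∈ ℝ^{2n×2k} have full column rank. There exists an SR decomposition A = S R with S ∈ Sp(2k,2n) and R ∈ T_{2k}(P_{2k}) if and only if all leading principal minors of even dimension of the matrix P_{2k} A^T J_{2n} A P_{2k}^T are nonzero, i.e., det((P_{2k} A^T J_{2n} A P_{2k}^T)_{1:2j,1:2j}) ≠ 0 for j = 1, …, k. -/

import Mathlib

/-!
Write `P = shuffleP k` and `Ĵ = blockJ k`, the block-diagonal Poisson matrix. The matrix `P` is
orthogonal and `P J Pᵀ = Ĵ`, so a decomposition `A = S R` with `R = Pᵀ Q P` gives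
`M := P Aᵀ J A Pᵀ = Qᵀ Ĵ Q`. Since `Q` is upper triangular, leading blocks multiply
(`leadSub_congr_upper`), and the minor of order `2j` of `M` is the square of that of `Q`, as
`det Ĵ = 1`. Full column rank of `A` makes `Q` invertible, so these minors do not vanish.

Conversely, `M` is skew-symmetric, and when its even leading minors are nonzero, a block `2 × 2`
Gaussian elimination (symplectic Gram–Schmidt, `exists_upper_congr`) yields an invertible upper
triangular `U` with `Uᵀ M U = Ĵ`. Each step (`schur_step`) works because the Schur complement of
the preceding leading block is a skew-symmetric invertible `2 × 2` matrix, hence `[[0, d], [-d, 0]]`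
with `d ≠ 0`. Then `S = A Pᵀ U P` and `R = Pᵀ U⁻¹ P` form the decomposition.
-/

open Matrix

noncomputable section

/-- The Poisson matrix `J_{2m} = [[0, I_m], [-I_m, 0]]`. -/
def PoissonJ (m : ℕ) : Matrix (Fin (2 * m)) (Fin (2 * m)) ℝ :=
  Matrix.of fun i j =>
    if (j : ℕ) = (i : ℕ) + m then (1 : ℝ)
    else if (i : ℕ) = (j : ℕ) + m then -1 else 0

/-- The symplectic Stiefel manifold `Sp(2k, 2n)`. -/
def SpStiefel (k n : ℕ) : Set (Matrix (Fin (2 * n)) (Fin (2 * k)) ℝ) :=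
  {X | Xᵀ * PoissonJ n * X = PoissonJ k}

/-- Index map of the perfect shuffle permutation: column `j` of `P_{2k}`
is the standard basis vector `e_{shuffleIdx k j}`. -/
def shuffleIdx (k : ℕ) (j : Fin (2 * k)) : Fin (2 * k) :=
  if h : (j : ℕ) < k then ⟨2 * (j : ℕ), by omega⟩
  else ⟨2 * ((j : ℕ) - k) + 1, by have hj := j.isLt; omega⟩

/-- The perfect shuffle permutation matrix `P_{2k} = [e_1, e_3, …, e_{2k-1}, e_2, …, e_{2k}]`. -/
def shuffleP (k : ℕ) : Matrix (Fin (2 * k)) (Fin (2 * k)) ℝ :=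
  Matrix.of fun i j => if i = shuffleIdx k j then 1 else 0

/-- The set `T_{2k}(P_{2k})` of perfect-shuffle congruences of upper triangular matrices. -/
def Tset (k : ℕ) : Set (Matrix (Fin (2 * k)) (Fin (2 * k)) ℝ) :=
  {R | ∃ Rhat : Matrix (Fin (2 * k)) (Fin (2 * k)) ℝ,
      (∀ i j : Fin (2 * k), (j : ℕ) < (i : ℕ) → Rhat i j = 0) ∧
      R = (shuffleP k)ᵀ * Rhat * shuffleP k}

/-- The `j × j` leading principal submatrix of a square matrix. -/
def leadSub {m : ℕ} (M : Matrix (Fin m) (Fin m) ℝ) (j : ℕ) (h : j ≤ m) :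
    Matrix (Fin j) (Fin j) ℝ :=
  M.submatrix (Fin.castLE h) (Fin.castLE h)

/-! ### The perfect shuffle and the block-diagonal form -/

/-- The block-diagonal Poisson matrix `diag([[0, 1], [-1, 0]], …, [[0, 1], [-1, 0]])` of size
`2k`, with indices counted from `0`. -/
def blockJ (k : ℕ) : Matrix (Fin (2 * k)) (Fin (2 * k)) ℝ :=
  Matrix.of fun i j =>
    if (j : ℕ) = (i : ℕ) + 1 ∧ (i : ℕ) % 2 = 0 then (1 : ℝ)
    else if (i : ℕ) = (j : ℕ) + 1 ∧ (j : ℕ) % 2 = 0 then -1 else 0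

/-- Upper triangularity in the form used by `Tset`. -/
def IsUpper {m : ℕ} (R : Matrix (Fin m) (Fin m) ℝ) : Prop :=
  ∀ i j : Fin m, (j : ℕ) < (i : ℕ) → R i j = 0

lemma shuffleIdx_injective (k : ℕ) : Function.Injective (shuffleIdx k) := by
  intro a b h
  unfold shuffleIdx at h
  split_ifs at h <;> simp only [Fin.mk.injEq] at h <;> ext <;> omega

lemma shuffleP_transpose_mul (k : ℕ) : (shuffleP k)ᵀ * shuffleP k = 1 := by
  ext a b
  simp [Matrix.mul_apply, shuffleP, Matrix.one_apply, (shuffleIdx_injective k).eq_iff, eq_comm]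

lemma shuffleP_mul_transpose (k : ℕ) : shuffleP k * (shuffleP k)ᵀ = 1 :=
  mul_eq_one_comm.mp (shuffleP_transpose_mul k)

lemma transpose_mul_blockJ_mul (k : ℕ) :
    (shuffleP k)ᵀ * blockJ k * shuffleP k = PoissonJ k := by
  ext a b
  have : ((shuffleP k)ᵀ * blockJ k * shuffleP k) a b
      = blockJ k (shuffleIdx k a) (shuffleIdx k b) := by
    simp [Matrix.mul_apply, shuffleP]
  rw [this]
  have ha := a.isLt
  have hb := b.isLt
  unfold blockJ PoissonJ shuffleIdx
  simp only [Matrix.of_apply]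
  split_ifs <;> first | rfl | (exfalso; simp only at *; omega)

lemma shuffle_conj_PoissonJ (k : ℕ) :
    shuffleP k * PoissonJ k * (shuffleP k)ᵀ = blockJ k := by
  rw [← transpose_mul_blockJ_mul]
  calc _ = (shuffleP k * (shuffleP k)ᵀ) * blockJ k * (shuffleP k * (shuffleP k)ᵀ) := by
        simp only [Matrix.mul_assoc]
    _ = _ := by simp [shuffleP_mul_transpose]

lemma PoissonJ_transpose (m : ℕ) : (PoissonJ m)ᵀ = -PoissonJ m := by
  ext i j
  have := i.isLt
  have := j.isLt
  simp only [PoissonJ, Matrix.transpose_apply, Matrix.neg_apply, Matrix.of_apply]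
  split_ifs <;> first | (exfalso; omega) | norm_num

lemma blockJ_succ (k : ℕ) :
    (blockJ (k + 1)).submatrix (finSumFinEquiv (m := 2 * k) (n := 2)) finSumFinEquiv
      = Matrix.fromBlocks (blockJ k) 0 0 !![0, 1; -1, 0] := by
  ext i j
  rcases i with i | i <;> rcases j with j | j
  · simp [blockJ]
  · have : (i : ℕ) < 2 * k := i.isLt
    simp [blockJ]
    split_ifs <;> first | rfl | (exfalso; omega)
  · have : (j : ℕ) < 2 * k := j.isLt
    simp [blockJ]
    split_ifs <;> first | rfl | (exfalso; omega)
  · fin_cases i <;> fin_cases j <;> simp [blockJ]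

lemma blockJ_det (k : ℕ) : (blockJ k).det = 1 := by
  induction k with
  | zero => simp
  | succ k ih =>
    have h := congrArg Matrix.det (blockJ_succ k)
    rw [Matrix.det_submatrix_equiv_self, Matrix.det_fromBlocks_zero₁₂, ih] at h
    rw [h]
    simp [Matrix.det_fin_two]

lemma leadSub_blockJ (k j : ℕ) (h : j ≤ k) :
    leadSub (blockJ k) (2 * j) (by omega) = blockJ j := by
  ext a b
  simp [leadSub, blockJ]

/-! ### Leading principal submatrices and triangular factors -/

lemma sum_castLE {m j : ℕ} (h : j ≤ m) (f : Fin m → ℝ)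
    (hf : ∀ x : Fin m, j ≤ (x : ℕ) → f x = 0) :
    ∑ x, f x = ∑ x : Fin j, f (Fin.castLE h x) := by
  obtain ⟨l, rfl⟩ := Nat.exists_eq_add_of_le h
  rw [Fin.sum_univ_add, Finset.sum_eq_zero (s := Finset.univ) (f := fun i => f (Fin.natAdd j i))
    (fun i _ => hf _ (by simp)), add_zero]
  rfl

/-- An upper triangular right factor maps the span of the first `j` basis vectors into itself, so
taking leading principal submatrices is multiplicative against it. -/
lemma leadSub_mul_upper {m j : ℕ} (h : j ≤ m) (N R : Matrix (Fin m) (Fin m) ℝ)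
    (hR : IsUpper R) : leadSub (N * R) j h = leadSub N j h * leadSub R j h := by
  ext a b
  simp only [leadSub, Matrix.submatrix_apply, Matrix.mul_apply]
  refine sum_castLE h _ fun x hx => ?_
  rw [hR x _ (by simp; omega), mul_zero]

lemma leadSub_congr_upper {m j : ℕ} (h : j ≤ m) (N R : Matrix (Fin m) (Fin m) ℝ)
    (hR : IsUpper R) :
    leadSub (Rᵀ * N * R) j h = (leadSub R j h)ᵀ * leadSub N j h * leadSub R j h := by
  have h1 : leadSub (Rᵀ * N) j h = (leadSub R j h)ᵀ * leadSub N j h := by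
    have := congrArg Matrix.transpose (leadSub_mul_upper h Nᵀ R hR)
    simpa [leadSub, Matrix.transpose_mul] using this
  rw [leadSub_mul_upper h _ R hR, h1]

lemma IsUpper.det {m : ℕ} {R : Matrix (Fin m) (Fin m) ℝ} (hR : IsUpper R) :
    R.det = ∏ i, R i i :=
  Matrix.det_of_isUpperTriangular fun i j h => hR i j h

lemma IsUpper.leadSub_det_ne_zero {m j : ℕ} (h : j ≤ m) {R : Matrix (Fin m) (Fin m) ℝ}
    (hR : IsUpper R) (hd : R.det ≠ 0) : (leadSub R j h).det ≠ 0 := by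
  have hL : IsUpper (leadSub R j h) := fun a b hab => hR _ _ (by simpa using hab)
  rw [hR.det, Finset.prod_ne_zero_iff] at hd
  rw [hL.det, Finset.prod_ne_zero_iff]
  exact fun i _ => hd _ (Finset.mem_univ _)

lemma IsUpper.inv {m : ℕ} {R : Matrix (Fin m) (Fin m) ℝ} (hR : IsUpper R) (hd : R.det ≠ 0) :
    IsUpper R⁻¹ := by
  have : Invertible R := Matrix.invertibleOfIsUnitDet R (isUnit_iff_ne_zero.mpr hd)
  have hb : R.BlockTriangular id := fun i j h => hR i j h
  exact fun i j h => Matrix.blockTriangular_inv_of_blockTriangular hb h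

/-! ### Symplectic Gram–Schmidt -/

/-- One step of the elimination: if `U` normalizes the skew-symmetric invertible leading block `M`,
then subtracting `M⁻¹ B` and rescaling the last basis vector by the nonzero entry `d` of the Schur
complement `[[0, d], [-d, 0]]` normalizes the whole matrix. -/
lemma schur_step {m : ℕ} (M J U : Matrix (Fin m) (Fin m) ℝ) (B : Matrix (Fin m) (Fin 2) ℝ)
    (D : Matrix (Fin 2) (Fin 2) ℝ) (hM : Mᵀ = -M) (hD : Dᵀ = -D) (hMd : M.det ≠ 0)
    (hdet : (Matrix.fromBlocks M B (-Bᵀ) D).det ≠ 0) (hU : Uᵀ * M * U = J) :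
    ∃ (W : Matrix (Fin m) (Fin 2) ℝ) (c : ℝ), c ≠ 0 ∧
      (Matrix.fromBlocks U W 0 !![1, 0; 0, c])ᵀ * Matrix.fromBlocks M B (-Bᵀ) D *
        Matrix.fromBlocks U W 0 !![1, 0; 0, c]
        = Matrix.fromBlocks J 0 0 !![0, 1; -1, 0] := by
  have hMu : IsUnit M.det := isUnit_iff_ne_zero.mpr hMd
  have hMi : M⁻¹ᵀ = -M⁻¹ := by
    rw [Matrix.transpose_nonsing_inv, hM]
    exact Matrix.inv_eq_left_inv (by simp [Matrix.nonsing_inv_mul _ hMu])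
  have : Invertible M := Matrix.invertibleOfIsUnitDet M hMu
  rw [Matrix.det_fromBlocks₁₁, Matrix.invOf_eq_nonsing_inv] at hdet
  obtain ⟨S, hS⟩ : ∃ S, S = D - -Bᵀ * M⁻¹ * B := ⟨_, rfl⟩
  rw [← hS] at hdet
  have hSd : S.det ≠ 0 := right_ne_zero_of_mul hdet
  have hSt : Sᵀ = -S := by
    rw [hS]
    simp only [Matrix.transpose_sub, Matrix.transpose_mul, Matrix.transpose_neg,
      Matrix.transpose_transpose, hMi, hD]
    simp [Matrix.mul_assoc]
    abel
  have hs : ∀ i j, S j i = -S i j := fun i j => congrFun (congrFun hSt i) j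
  have h00 : S 0 0 = 0 := by linarith [hs 0 0]
  have h11 : S 1 1 = 0 := by linarith [hs 1 1]
  have h10 : S 1 0 = -S 0 1 := hs 0 1
  have hd : S 0 1 ≠ 0 := by
    intro h
    apply hSd
    simp [Matrix.det_fin_two, h, h00]
  refine ⟨-(M⁻¹ * B * !![1, 0; 0, (S 0 1)⁻¹]), (S 0 1)⁻¹, inv_ne_zero hd, ?_⟩
  obtain ⟨E, hE⟩ : ∃ E : Matrix (Fin 2) (Fin 2) ℝ, E = !![1, 0; 0, (S 0 1)⁻¹] := ⟨_, rfl⟩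
  rw [← hE]
  have hESE : Eᵀ * S * E = !![0, 1; -1, 0] := by
    ext i j
    fin_cases i <;> fin_cases j <;>
      simp [hE, Matrix.mul_apply, Fin.sum_univ_two, h00, h11, h10, hd]
  have hMW : M * -(M⁻¹ * B * E) + B * E = 0 := by
    rw [Matrix.mul_neg, Matrix.mul_assoc, Matrix.mul_nonsing_inv_cancel_left _ _ hMu]
    simp
  have hWM : (-(M⁻¹ * B * E))ᵀ * M + Eᵀ * -Bᵀ = 0 := by
    simp only [Matrix.transpose_neg, Matrix.transpose_mul, hMi]
    simp [Matrix.mul_assoc, Matrix.nonsing_inv_mul _ hMu]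
  rw [Matrix.fromBlocks_transpose, Matrix.fromBlocks_multiply, Matrix.fromBlocks_multiply, hWM]
  congr 1
  · simp [hU]
  · simp only [Matrix.transpose_zero, Matrix.zero_mul, add_zero]
    rw [Matrix.mul_assoc Uᵀ, Matrix.mul_assoc Uᵀ, ← Matrix.mul_add, hMW, Matrix.mul_zero]
  · simp
  · rw [← hESE, hS]
    simp only [Matrix.transpose_neg, Matrix.transpose_mul, hMi]
    simp [Matrix.mul_assoc, Matrix.mul_add, Matrix.add_mul]
    abel

/-- Symplectic Gram–Schmidt: a skew-symmetric matrix with nonvanishing even leading principal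
minors is congruent to `blockJ k` through an invertible upper triangular matrix. -/
lemma exists_upper_congr : ∀ (k : ℕ) (M : Matrix (Fin (2 * k)) (Fin (2 * k)) ℝ), Mᵀ = -M →
    (∀ j : ℕ, 1 ≤ j → ∀ hjk : j ≤ k, (leadSub M (2 * j) (by omega)).det ≠ 0) →
    ∃ U, IsUpper U ∧ U.det ≠ 0 ∧ Uᵀ * M * U = blockJ k := by
  intro k
  induction k with
  | zero =>
    intro M _ _
    refine ⟨1, fun i => i.elim0, by simp, ?_⟩
    ext i
    exact i.elim0
  | succ k ih =>
    intro M hM hmin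
    have hs : ∀ i j, M j i = -M i j := fun i j => congrFun (congrFun hM i) j
    let e := finSumFinEquiv (m := 2 * k) (n := 2)
    obtain ⟨M', hM'⟩ : ∃ M', M' = leadSub M (2 * k) (by omega) := ⟨_, rfl⟩
    have hM't : M'ᵀ = -M' := by
      ext i j
      rw [hM']
      exact hs _ _
    obtain ⟨U, hUup, hUd, hU⟩ := ih M' hM't fun j hj hjk => by
      rw [hM']
      exact hmin j hj (by omega)
    have hM'd : M'.det ≠ 0 := by
      intro h0
      have h := congrArg Matrix.det hU
      rw [Matrix.det_mul, Matrix.det_mul, h0, blockJ_det] at h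
      simp at h
    let B : Matrix (Fin (2 * k)) (Fin 2) ℝ := fun i j => M (e (.inl i)) (e (.inr j))
    let D : Matrix (Fin 2) (Fin 2) ℝ := fun i j => M (e (.inr i)) (e (.inr j))
    have hblocks : M.submatrix e e = Matrix.fromBlocks M' B (-Bᵀ) D := by
      ext i j
      rcases i with i | i <;> rcases j with j | j
      · rw [hM']; rfl
      · rfl
      · exact hs _ _
      · rfl
    have hdet : (Matrix.fromBlocks M' B (-Bᵀ) D).det ≠ 0 := by
      rw [← hblocks, Matrix.det_submatrix_equiv_self]
      exact hmin (k + 1) (by omega) le_rfl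
    have hD : Dᵀ = -D := by
      ext i j
      exact hs _ _
    obtain ⟨W, c, hc, hV⟩ := schur_step M' (blockJ k) U B D hM't hD hM'd hdet hU
    obtain ⟨V, hVdef⟩ : ∃ V, V = Matrix.fromBlocks U W 0 !![1, 0; 0, c] := ⟨_, rfl⟩
    rw [← hVdef] at hV
    refine ⟨V.submatrix e.symm e.symm, ?_, ?_, ?_⟩
    · intro i j hij
      obtain ⟨i, rfl⟩ := e.surjective i
      obtain ⟨j, rfl⟩ := e.surjective j
      simp only [Matrix.submatrix_apply, Equiv.symm_apply_apply, hVdef]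
      rcases i with i | i <;> rcases j with j | j
      · exact hUup i j (by simpa [e] using hij)
      · have := i.isLt
        simp [e] at hij
        omega
      · rfl
      · have hij' : (j : ℕ) < i := by simpa [e] using hij
        fin_cases i <;> fin_cases j <;> simp at hij' ⊢
    · rw [Matrix.det_submatrix_equiv_self, hVdef, Matrix.det_fromBlocks_zero₂₁]
      simp [Matrix.det_fin_two, hUd, hc]
    · have hMe : M = (M.submatrix e e).submatrix e.symm e.symm := by simp
      have hJe : blockJ (k + 1) = ((blockJ (k + 1)).submatrix e e).submatrix e.symm e.symm := by
        simp
      rw [hMe, hJe, hblocks, blockJ_succ, ← hV, Matrix.transpose_submatrix,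
        Matrix.submatrix_mul_equiv, Matrix.submatrix_mul_equiv]

/-! ### Existence of the decomposition -/

lemma det_ne_zero_of_rank {m : ℕ} (R : Matrix (Fin m) (Fin m) ℝ) (h : m ≤ R.rank) :
    R.det ≠ 0 := by
  have hli : LinearIndependent ℝ R.row := by
    rw [linearIndependent_iff_card_le_finrank_span, Set.finrank, ← R.rank_eq_finrank_span_row]
    simpa using h
  rw [Matrix.linearIndependent_rows_iff_isUnit, Matrix.isUnit_iff_isUnit_det] at hli
  exact hli.ne_zero

/-- **Theorem (existence of the SR decomposition).**
Let `k ≤ n` and let `A ∈ ℝ^{2n×2k}` have full column rank. There exists an SR decomposition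
`A = S R` with `S ∈ Sp(2k,2n)` and `R ∈ T_{2k}(P_{2k})` if and only if all leading principal
minors of even dimension of `P_{2k} Aᵀ J_{2n} A P_{2k}ᵀ` are nonzero. -/
theorem sr_decomposition_existence_iff
    (k n : ℕ) (hkn : k ≤ n)
    (A : Matrix (Fin (2 * n)) (Fin (2 * k)) ℝ)
    (hrank : A.rank = 2 * k) :
    (∃ S ∈ SpStiefel k n, ∃ R ∈ Tset k, A = S * R) ↔
      (∀ j : ℕ, 1 ≤ j → ∀ hjk : j ≤ k,
        (leadSub (shuffleP k * (Aᵀ * PoissonJ n * A) * (shuffleP k)ᵀ) (2 * j)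
          (by omega)).det ≠ 0) := by
  have key : shuffleP k * (Aᵀ * PoissonJ n * A) * (shuffleP k)ᵀ
      = (A * (shuffleP k)ᵀ)ᵀ * PoissonJ n * (A * (shuffleP k)ᵀ) := by
    simp [Matrix.transpose_mul, Matrix.mul_assoc]
  constructor
  · rintro ⟨S, hS, R, ⟨Q, hQ, rfl⟩, hA⟩ j _ hjk
    have hQd : Q.det ≠ 0 := by
      refine det_ne_zero_of_rank Q ?_
      calc 2 * k = A.rank := hrank.symm
        _ ≤ ((shuffleP k)ᵀ * Q * shuffleP k).rank := by rw [hA]; exact Matrix.rank_mul_le_right _ _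
        _ ≤ ((shuffleP k)ᵀ * Q).rank := Matrix.rank_mul_le_left _ _
        _ ≤ Q.rank := Matrix.rank_mul_le_right _ _
    have hAP : A * (shuffleP k)ᵀ = S * (shuffleP k)ᵀ * Q := by
      rw [hA]
      simp only [Matrix.mul_assoc, shuffleP_mul_transpose, Matrix.mul_one]
    have hcongr : shuffleP k * (Aᵀ * PoissonJ n * A) * (shuffleP k)ᵀ = Qᵀ * blockJ k * Q := by
      rw [key, hAP, ← shuffle_conj_PoissonJ, ← show Sᵀ * PoissonJ n * S = PoissonJ k from hS]
      simp [Matrix.transpose_mul, Matrix.mul_assoc]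
    have hd := IsUpper.leadSub_det_ne_zero (j := 2 * j) (by omega) hQ hQd
    rw [hcongr, leadSub_congr_upper _ _ _ hQ, leadSub_blockJ k j hjk, Matrix.det_mul,
      Matrix.det_mul, Matrix.det_transpose, blockJ_det]
    simpa using hd
  · intro hmin
    obtain ⟨U, hUup, hUd, hU⟩ := exists_upper_congr k _ (by
      simp [Matrix.transpose_mul, Matrix.mul_assoc, PoissonJ_transpose]) hmin
    have hUu : IsUnit U.det := isUnit_iff_ne_zero.mpr hUd
    refine ⟨A * (shuffleP k)ᵀ * U * shuffleP k, ?_, (shuffleP k)ᵀ * U⁻¹ * shuffleP k,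
      ⟨U⁻¹, hUup.inv hUd, rfl⟩, ?_⟩
    · change _ * _ * _ = _
      rw [← transpose_mul_blockJ_mul k, ← hU, key]
      simp [Matrix.transpose_mul, Matrix.mul_assoc]
    · calc A = A * ((shuffleP k)ᵀ * (U * (1 * U⁻¹)) * shuffleP k) := by
            rw [Matrix.one_mul, Matrix.mul_nonsing_inv _ hUu, Matrix.mul_one,
              shuffleP_transpose_mul, Matrix.mul_one]
        _ = _ := by
            rw [← shuffleP_mul_transpose]
            simp only [Matrix.mul_assoc]
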